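/- arXiv:2605.10372 — 2 statements merged into one kernel-verified Lean document; each statement's English description precedes it below -/
import Mathlib

section
/- Let f ≥ 1 be a natural number, let n = 3f+1, and fix a subset B of the n nodes with |B| = f (the Byzantine nodes; the remaining 2f+1 nodes are honest). Let 1 ≤ n_c ≤ n and let S be a subset of size n_c chosen uniformly at random from all n_c-element subsets of the n nodes (sampling without replacement). Then the probability that S contains more than n_c/2 Byzantine nodes, i.e. P(|S ∩ B| > n_c/2), is at most exp(−n_c/18). -/
open Finset

/-!
This is a Chernoff bound. Counting the pairs `T ⊆ S` with `T ⊆ B` and `#T = j` gives the binomial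
moments of the hypergeometric variable `#(S ∩ B)`. They are at most those of a binomial variable
with `k` trials and success probability `#B / #V ≤ 1 / 3`, so
`𝔼 (1 + t) ^ #(S ∩ B) ≤ (1 + t / 3) ^ k` for `t ≥ 0`. With `1 + t = x ^ 2`, Markov's inequality
bounds the probability of a Byzantine majority by `((x ^ 2 + 2) / (3 * x)) ^ k`. The optimal base
is `x = √2`; the rational approximation `x = 7 / 5` gives
`33 / 35 ≤ 1 - 1 / 18 ≤ exp (-1 / 18)`.
-/

lemma pow_mul_descFactorial_le_pow_mul_descFactorial {m n : ℕ} (hmn : m ≤ n) (j : ℕ) :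
    n ^ j * m.descFactorial j ≤ m ^ j * n.descFactorial j := by
  induction j with
  | zero => simp
  | succ j ih =>
    have factor_le : n * (m - j) ≤ m * (n - j) := by
      rw [Nat.mul_sub, Nat.mul_sub, mul_comm n m]
      gcongr
    calc n ^ (j + 1) * m.descFactorial (j + 1)
        = n * (m - j) * (n ^ j * m.descFactorial j) := by rw [Nat.descFactorial_succ]; ring
      _ ≤ m * (n - j) * (m ^ j * n.descFactorial j) := Nat.mul_le_mul factor_le ih
      _ = m ^ (j + 1) * n.descFactorial (j + 1) := by rw [Nat.descFactorial_succ]; ring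

lemma pow_mul_choose_le_pow_mul_choose {m n : ℕ} (hmn : m ≤ n) (j : ℕ) :
    n ^ j * m.choose j ≤ m ^ j * n.choose j := by
  refine Nat.le_of_mul_le_mul_left ?_ j.factorial_pos
  simpa only [Nat.descFactorial_eq_factorial_mul_choose, mul_left_comm] using
    pow_mul_descFactorial_le_pow_mul_descFactorial hmn j

lemma choose_le_choose_mul_div_pow {𝕜 : Type*} [Field 𝕜] [LinearOrder 𝕜] [IsStrictOrderedRing 𝕜]
    {m n : ℕ} (hmn : m ≤ n) (j : ℕ) : (m.choose j : 𝕜) ≤ n.choose j * (m / n : 𝕜) ^ j := by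
  obtain rfl | hn := n.eq_zero_or_pos
  · obtain rfl : m = 0 := Nat.le_zero.mp hmn
    cases j <;> simp
  · rw [div_pow, ← mul_div_assoc, le_div_iff₀ (by positivity), mul_comm, mul_comm (n.choose j : 𝕜)]
    exact_mod_cast pow_mul_choose_le_pow_mul_choose hmn j

lemma one_add_pow_eq_sum_range_choose {R : Type*} [CommSemiring R] {m k : ℕ} (hmk : m ≤ k)
    (t : R) : (1 + t) ^ m = ∑ j ∈ range (k + 1), t ^ j * m.choose j := by
  rw [add_comm, add_pow]
  simp only [one_pow, mul_one]
  refine sum_subset (by gcongr) fun j _ hj ↦ ?_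
  rw [Nat.choose_eq_zero_of_lt (by simpa using hj), Nat.cast_zero, mul_zero]

lemma card_filter_mul_pow_le_sum_pow {ι R : Type*} [Semiring R] [PartialOrder R]
    [IsOrderedRing R] (s : Finset ι) (X : ι → ℕ) (a : ℕ) {x : R} (hx : 1 ≤ x) :
    #{i ∈ s | a ≤ X i} * x ^ a ≤ ∑ i ∈ s, x ^ X i :=
  calc #{i ∈ s | a ≤ X i} * x ^ a = ∑ i ∈ s with a ≤ X i, x ^ a := by
        rw [sum_const, nsmul_eq_mul]
    _ ≤ ∑ i ∈ s with a ≤ X i, x ^ X i :=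
        sum_le_sum fun _ hi ↦ pow_le_pow_right₀ hx (mem_filter.mp hi).2
    _ ≤ ∑ i ∈ s, x ^ X i :=
        sum_le_sum_of_subset_of_nonneg (filter_subset _ _) fun _ _ _ ↦
          pow_nonneg (zero_le_one.trans hx) _

section Hypergeometric

variable {α : Type*} [DecidableEq α] {V B : Finset α}

lemma sum_powersetCard_choose_card_inter (hBV : B ⊆ V) {j k : ℕ} (hjk : j ≤ k) :
    ∑ S ∈ powersetCard k V, (#(S ∩ B)).choose j = (#B).choose j * (#V - j).choose (k - j) := by
  have subsets_inter (S : Finset α) :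
      (powersetCard j B).bipartiteAbove (fun S T ↦ T ⊆ S) S = powersetCard j (S ∩ B) := by
    ext
    simp only [mem_bipartiteAbove, mem_powersetCard, subset_inter_iff]
    tauto
  calc ∑ S ∈ powersetCard k V, (#(S ∩ B)).choose j
      = ∑ S ∈ powersetCard k V, #((powersetCard j B).bipartiteAbove (fun S T ↦ T ⊆ S) S) := by
        simp only [subsets_inter, card_powersetCard]
    _ = ∑ T ∈ powersetCard j B, #{S ∈ powersetCard k V | T ⊆ S} :=
        sum_card_bipartiteAbove_eq_sum_card_bipartiteBelow _
    _ = ∑ _T ∈ powersetCard j B, (#V - j).choose (k - j) := by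
        refine sum_congr rfl fun _ hT ↦ ?_
        obtain ⟨hTB, rfl⟩ := mem_powersetCard.mp hT
        exact card_filter_powersetCard_subset _ V k (hTB.trans hBV) hjk
    _ = (#B).choose j * (#V - j).choose (k - j) := by
        rw [sum_const, card_powersetCard, smul_eq_mul]

variable {𝕜 : Type*} [Field 𝕜] [LinearOrder 𝕜] [IsStrictOrderedRing 𝕜]

lemma sum_powersetCard_choose_card_inter_le (hBV : B ⊆ V) {j k : ℕ} (hjk : j ≤ k) :
    ∑ S ∈ powersetCard k V, ((#(S ∩ B)).choose j : 𝕜) ≤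
      (#V).choose k * (k.choose j * (#B / #V : 𝕜) ^ j) :=
  calc ∑ S ∈ powersetCard k V, ((#(S ∩ B)).choose j : 𝕜)
      = (#B).choose j * (#V - j).choose (k - j) := by
        exact_mod_cast sum_powersetCard_choose_card_inter hBV hjk
    _ ≤ (#V).choose j * (#B / #V : 𝕜) ^ j * (#V - j).choose (k - j) := by
        gcongr
        exact choose_le_choose_mul_div_pow (card_le_card hBV) j
    _ = ((#V).choose j * (#V - j).choose (k - j) : ℕ) * (#B / #V : 𝕜) ^ j := by
        push_cast; ring
    _ = (#V).choose k * (k.choose j * (#B / #V : 𝕜) ^ j) := by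
        rw [← Nat.choose_mul hjk]; push_cast; ring

lemma sum_powersetCard_one_add_pow_card_inter_le (hBV : B ⊆ V) (k : ℕ) {t : 𝕜} (ht : 0 ≤ t) :
    ∑ S ∈ powersetCard k V, (1 + t) ^ #(S ∩ B) ≤ (#V).choose k * (1 + t * (#B / #V)) ^ k :=
  calc ∑ S ∈ powersetCard k V, (1 + t) ^ #(S ∩ B)
      = ∑ S ∈ powersetCard k V, ∑ j ∈ range (k + 1), t ^ j * (#(S ∩ B)).choose j := by
        refine sum_congr rfl fun S hS ↦ one_add_pow_eq_sum_range_choose ?_ t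
        exact (card_le_card inter_subset_left).trans_eq (mem_powersetCard.mp hS).2
    _ = ∑ j ∈ range (k + 1), t ^ j * ∑ S ∈ powersetCard k V, ((#(S ∩ B)).choose j : 𝕜) := by
        rw [sum_comm]; simp only [mul_sum]
    _ ≤ ∑ j ∈ range (k + 1), t ^ j * ((#V).choose k * (k.choose j * (#B / #V : 𝕜) ^ j)) := by
        gcongr with j hj
        exact sum_powersetCard_choose_card_inter_le hBV (mem_range_succ_iff.mp hj)
    _ = (#V).choose k * (1 + t * (#B / #V)) ^ k := by
        rw [one_add_pow_eq_sum_range_choose le_rfl, mul_sum]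
        exact sum_congr rfl fun j _ ↦ by ring

lemma card_filter_two_mul_card_inter_mul_pow_le (hBV : B ⊆ V) (k : ℕ) {x : 𝕜} (hx : 1 ≤ x) :
    #{S ∈ powersetCard k V | k ≤ 2 * #(S ∩ B)} * x ^ k ≤
      (#V).choose k * (1 + (x ^ 2 - 1) * (#B / #V)) ^ k :=
  calc #{S ∈ powersetCard k V | k ≤ 2 * #(S ∩ B)} * x ^ k
      ≤ ∑ S ∈ powersetCard k V, x ^ (2 * #(S ∩ B)) :=
        card_filter_mul_pow_le_sum_pow _ _ k hx
    _ = ∑ S ∈ powersetCard k V, (1 + (x ^ 2 - 1)) ^ #(S ∩ B) := by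
        simp only [pow_mul, add_sub_cancel]
    _ ≤ (#V).choose k * (1 + (x ^ 2 - 1) * (#B / #V)) ^ k :=
        sum_powersetCard_one_add_pow_card_inter_le hBV k (sub_nonneg.mpr (one_le_pow₀ hx))

end Hypergeometric

theorem stmt_0_general {α : Type*} [DecidableEq α] {V B : Finset α} (hBV : B ⊆ V)
    (hB : 3 * #B ≤ #V) {k : ℕ} (hk : k ≤ #V) :
    (#{S ∈ powersetCard k V | k ≤ 2 * #(S ∩ B)} : ℝ) / #(powersetCard k V) ≤
      Real.exp (-(k : ℝ) / 18) := by
  have density_le : (#B / #V : ℝ) ≤ 1 / 3 := by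
    have : (3 * #B : ℝ) ≤ #V := by exact_mod_cast hB
    exact div_le_of_le_mul₀ (by positivity) (by norm_num) (by linarith)
  have chernoff : #{S ∈ powersetCard k V | k ≤ 2 * #(S ∩ B)} * (7 / 5 : ℝ) ^ k ≤
      (#V).choose k * (33 / 35) ^ k * (7 / 5) ^ k :=
    calc #{S ∈ powersetCard k V | k ≤ 2 * #(S ∩ B)} * (7 / 5 : ℝ) ^ k
        ≤ (#V).choose k * (1 + ((7 / 5) ^ 2 - 1) * (#B / #V : ℝ)) ^ k :=
          card_filter_two_mul_card_inter_mul_pow_le hBV k (by norm_num)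
      _ ≤ (#V).choose k * (1 + ((7 / 5) ^ 2 - 1) * (1 / 3)) ^ k := by gcongr
      _ = (#V).choose k * (33 / 35) ^ k * (7 / 5) ^ k := by
          rw [mul_assoc, ← mul_pow]; norm_num
  have base_le : (33 / 35 : ℝ) ≤ Real.exp (-(1 / 18)) :=
    le_trans (by norm_num) (Real.one_sub_le_exp_neg (1 / 18))
  have choose_pos : (0 : ℝ) < (#V).choose k := by exact_mod_cast Nat.choose_pos hk
  calc (#{S ∈ powersetCard k V | k ≤ 2 * #(S ∩ B)} : ℝ) / #(powersetCard k V)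
      ≤ (33 / 35) ^ k := by
        rw [card_powersetCard, div_le_iff₀' choose_pos]
        exact le_of_mul_le_mul_right chernoff (by positivity)
    _ ≤ Real.exp (-(1 / 18)) ^ k := by gcongr
    _ = Real.exp (-(k : ℝ) / 18) := by
        rw [← Real.exp_nat_mul]; ring_nf

/-- A committee of size `nc` sampled uniformly from the `n = 3f+1` nodes
(uniform over all `nc`-element subsets, i.e. sampling without replacement)
contains more than `nc/2` Byzantine nodes (i.e. nodes of the fixed set `B`
with `|B| = f`) with probability at most `exp (-nc/18)`. -/
theorem stmt_0 (f : ℕ) (hf : 1 ≤ f) (n : ℕ) (hn : n = 3 * f + 1)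
    (B : Finset (Fin n)) (hB : B.card = f)
    (nc : ℕ) (hnc1 : 1 ≤ nc) (hnc2 : nc ≤ n) :
    (((Finset.powersetCard nc (Finset.univ : Finset (Fin n))).filter
        (fun S => nc < 2 * (S ∩ B).card)).card : ℝ) /
      ((Finset.powersetCard nc (Finset.univ : Finset (Fin n))).card : ℝ)
      ≤ Real.exp (-(nc : ℝ) / 18) := by
  refine le_trans ?_ (stmt_0_general B.subset_univ (by simp; omega) (by simpa using hnc2))
  gcongr with S
  exact le_of_lt
end

section
/- Let f ≥ 1 be a natural number, n = 3f+1, and fix a subset B of the n nodes with |B| = f (the Byzantine nodes). Let ε > 0 and φ ≥ 1 be real numbers, and let n_c be a natural number with 1 ≤ n_c ≤ n and n_c ≥ 18·log(2φ/ε). If S is a subset of size n_c chosen uniformly at random from all n_c-element subsets of the n nodes, then the probability that more than n_c/2 of the sampled nodes are Byzantine, i.e. P(|S ∩ B| > n_c/2), is at most ε/(2φ). -/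
open Finset

/-!
The number `#(S ∩ B)` for a uniform `m`-subset `S` of `U` is hypergeometric. Its `j`-th factorial
moment is at most that of a binomial variable with parameters `m` and `p ≥ #B / #U`, so its
generating function at `1 + x`, `x ≥ 0`, is at most `(1 + p * x) ^ m`. Markov's inequality at
`1 + x = (1 - p) / p` bounds the probability of `m ≤ 2 * #(S ∩ B)` by `(4 * p * (1 - p)) ^ (m / 2)`,
and `4 * p * (1 - p) = 1 - (1 - 2 * p) ^ 2 ≤ exp (-(1 - 2 * p) ^ 2)`. For `p = 1 / 3` the exponent
is `-m / 18`.
-/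

section Committee

variable {K : Type*} [CommRing K] [LinearOrder K] [IsStrictOrderedRing K]

theorem choose_le_pow_mul_choose {p : K} (hp₀ : 0 ≤ p) (hp₁ : p ≤ 1) {k n : ℕ}
    (hkn : (k : K) ≤ p * n) (j : ℕ) : (k.choose j : K) ≤ p ^ j * n.choose j := by
  induction j with
  | zero => simp
  | succ j ih =>
    have hsub : ((k - j : ℕ) : K) ≤ p * (n - j : ℕ) := by
      rcases le_total k j with hkj | hjk
      · rw [Nat.sub_eq_zero_of_le hkj, Nat.cast_zero]
        positivity
      · have hn : (n : K) - j ≤ (n - j : ℕ) := by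
          rw [sub_le_iff_le_add]
          exact_mod_cast le_tsub_add
        calc ((k - j : ℕ) : K) = k - j := Nat.cast_sub hjk
          _ ≤ p * n - p * j := sub_le_sub hkn (mul_le_of_le_one_left j.cast_nonneg hp₁)
          _ = p * (n - j) := by ring
          _ ≤ p * (n - j : ℕ) := by gcongr
    have choose_succ (a : ℕ) : (a.choose (j + 1) : K) * (j + 1) = a.choose j * (a - j : ℕ) :=
      mod_cast a.choose_succ_right_eq j
    refine le_of_mul_le_mul_right ?_ (by positivity : (0 : K) < j + 1)
    calc (k.choose (j + 1) : K) * (j + 1) = k.choose j * (k - j : ℕ) := choose_succ k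
      _ ≤ (p ^ j * n.choose j) * (p * (n - j : ℕ)) := by gcongr
      _ = p ^ (j + 1) * (n.choose j * (n - j : ℕ)) := by ring
      _ = p ^ (j + 1) * n.choose (j + 1) * (j + 1) := by rw [← choose_succ, mul_assoc]

theorem one_add_pow_eq_sum_range {R : Type*} [CommSemiring R] (x : R) {k m : ℕ} (hkm : k ≤ m) :
    (1 + x) ^ k = ∑ j ∈ range (m + 1), x ^ j * k.choose j := by
  rw [add_comm, add_pow]
  simp only [one_pow, mul_one]
  refine sum_subset (range_subset_range.2 (by lia)) fun j _ hj ↦ ?_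
  rw [Nat.choose_eq_zero_of_lt (by simpa using hj), Nat.cast_zero, mul_zero]

theorem card_filter_le_mul_pow_le_sum_pow {ι R : Type*} [Semiring R] [PartialOrder R]
    [IsOrderedRing R] (s : Finset ι) (g : ι → ℕ) (m : ℕ) {z : R} (hz : 1 ≤ z) :
    #{i ∈ s | m ≤ g i} * z ^ m ≤ ∑ i ∈ s, z ^ g i := by
  calc #{i ∈ s | m ≤ g i} * z ^ m
      ≤ ∑ i ∈ s with m ≤ g i, z ^ g i := by
        rw [← nsmul_eq_mul]
        exact card_nsmul_le_sum _ _ _ fun i hi ↦ pow_le_pow_right₀ hz (mem_filter.mp hi).2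
    _ ≤ ∑ i ∈ s, z ^ g i :=
        sum_le_sum_of_subset_of_nonneg (filter_subset _ _) fun i _ _ ↦
          pow_nonneg (zero_le_one.trans hz) _

theorem two_mul_one_sub_le_exp_mul_sqrt {p : ℝ} (hp₀ : 0 < p) (hp₁ : p ≤ 1) :
    2 * (1 - p) ≤ Real.exp (-((1 - 2 * p) ^ 2 / 2)) * √((1 - p) / p) := by
  have hratio : 0 ≤ (1 - p) / p := div_nonneg (sub_nonneg.mpr hp₁) hp₀.le
  have hexp : 4 * p * (1 - p) ≤ Real.exp (-(1 - 2 * p) ^ 2) := by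
    linarith [Real.add_one_le_exp (-(1 - 2 * p) ^ 2)]
  refine le_of_sq_le_sq ?_ (by positivity)
  calc (2 * (1 - p)) ^ 2 = 4 * p * (1 - p) * ((1 - p) / p) := by field_simp; ring
    _ ≤ Real.exp (-(1 - 2 * p) ^ 2) * ((1 - p) / p) := by gcongr
    _ = (Real.exp (-((1 - 2 * p) ^ 2 / 2)) * √((1 - p) / p)) ^ 2 := by
      rw [mul_pow, Real.sq_sqrt hratio, ← Real.exp_nat_mul]
      ring_nf

variable {α : Type*} [DecidableEq α] {U B : Finset α}

theorem sum_choose_card_inter (hBU : B ⊆ U) {j m : ℕ} (hjm : j ≤ m) :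
    ∑ S ∈ powersetCard m U, (#(S ∩ B)).choose j = (#B).choose j * (#U - j).choose (m - j) := by
  have choose_eq (S : Finset α) :
      (#(S ∩ B)).choose j = #{T ∈ powersetCard j B | T ⊆ S} := by
    rw [← card_powersetCard]
    congr 1
    ext T
    simp only [mem_powersetCard, mem_filter, subset_inter_iff]
    tauto
  calc ∑ S ∈ powersetCard m U, (#(S ∩ B)).choose j
      = ∑ S ∈ powersetCard m U, #{T ∈ powersetCard j B | T ⊆ S} :=
        sum_congr rfl fun S _ ↦ choose_eq S
    _ = ∑ T ∈ powersetCard j B, #{S ∈ powersetCard m U | T ⊆ S} := by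
        simp only [card_filter]
        exact sum_comm
    _ = ∑ _T ∈ powersetCard j B, (#U - j).choose (m - j) := by
        refine sum_congr rfl fun T hT ↦ ?_
        obtain ⟨hTB, rfl⟩ := mem_powersetCard.mp hT
        exact card_filter_powersetCard_subset T U m (hTB.trans hBU) hjm
    _ = (#B).choose j * (#U - j).choose (m - j) := by
        rw [sum_const, card_powersetCard, smul_eq_mul]

theorem sum_choose_card_inter_le (hBU : B ⊆ U) {p : K} (hp₀ : 0 ≤ p) (hp₁ : p ≤ 1)
    (hBp : (#B : K) ≤ p * #U) {j m : ℕ} (hjm : j ≤ m) :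
    ∑ S ∈ powersetCard m U, ((#(S ∩ B)).choose j : K)
      ≤ (#U).choose m * (p ^ j * m.choose j) := by
  have choose_mul : ((#U).choose m * m.choose j : K) = (#U).choose j * (#U - j).choose (m - j) :=
    mod_cast Nat.choose_mul hjm
  calc ∑ S ∈ powersetCard m U, ((#(S ∩ B)).choose j : K)
      = (#B).choose j * (#U - j).choose (m - j) := mod_cast sum_choose_card_inter hBU hjm
    _ ≤ p ^ j * (#U).choose j * (#U - j).choose (m - j) := by
        gcongr
        exact choose_le_pow_mul_choose hp₀ hp₁ hBp j
    _ = (#U).choose m * (p ^ j * m.choose j) := by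
        rw [mul_assoc, ← choose_mul]
        ring

theorem sum_one_add_pow_card_inter_le (hBU : B ⊆ U) {p : K} (hp₀ : 0 ≤ p) (hp₁ : p ≤ 1)
    (hBp : (#B : K) ≤ p * #U) (m : ℕ) {x : K} (hx : 0 ≤ x) :
    ∑ S ∈ powersetCard m U, (1 + x) ^ #(S ∩ B) ≤ (#U).choose m * (1 + p * x) ^ m := by
  have card_inter_le {S : Finset α} (hS : S ∈ powersetCard m U) : #(S ∩ B) ≤ m :=
    (card_le_card inter_subset_left).trans_eq (mem_powersetCard.mp hS).2
  calc ∑ S ∈ powersetCard m U, (1 + x) ^ #(S ∩ B)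
      = ∑ S ∈ powersetCard m U, ∑ j ∈ range (m + 1), x ^ j * (#(S ∩ B)).choose j :=
        sum_congr rfl fun S hS ↦ one_add_pow_eq_sum_range x (card_inter_le hS)
    _ = ∑ j ∈ range (m + 1), x ^ j * ∑ S ∈ powersetCard m U, ((#(S ∩ B)).choose j : K) := by
        rw [sum_comm]
        simp only [mul_sum]
    _ ≤ ∑ j ∈ range (m + 1), x ^ j * ((#U).choose m * (p ^ j * m.choose j)) := by
        refine sum_le_sum fun j hj ↦ ?_
        gcongr
        exact sum_choose_card_inter_le hBU hp₀ hp₁ hBp (Nat.lt_succ_iff.mp (mem_range.mp hj))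
    _ = (#U).choose m * ∑ j ∈ range (m + 1), (p * x) ^ j * m.choose j := by
        rw [mul_sum]
        exact sum_congr rfl fun j _ ↦ by ring
    _ = (#U).choose m * (1 + p * x) ^ m := by rw [← one_add_pow_eq_sum_range _ le_rfl]

theorem card_filter_le_two_mul_card_inter_le (hBU : B ⊆ U) {p : ℝ} (hp₀ : 0 < p)
    (hp₁ : p ≤ 1 / 2) (hBp : (#B : ℝ) ≤ p * #U) (m : ℕ) :
    (#{S ∈ powersetCard m U | m ≤ 2 * #(S ∩ B)} : ℝ)
      ≤ Real.exp (-((1 - 2 * p) ^ 2 / 2 * m)) * (#U).choose m := by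
  set z : ℝ := √((1 - p) / p)
  have hratio : 1 ≤ (1 - p) / p := by rw [one_le_div hp₀]; linarith
  have hz : 1 ≤ z := Real.one_le_sqrt.mpr hratio
  have hz_sq : z ^ 2 = 1 + (1 - 2 * p) / p := by
    rw [Real.sq_sqrt (zero_le_one.trans hratio)]
    field_simp
    ring
  refine le_of_mul_le_mul_right ?_ (by positivity : 0 < z ^ m)
  calc #{S ∈ powersetCard m U | m ≤ 2 * #(S ∩ B)} * z ^ m
      ≤ ∑ S ∈ powersetCard m U, z ^ (2 * #(S ∩ B)) :=
        card_filter_le_mul_pow_le_sum_pow _ _ _ hz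
    _ = ∑ S ∈ powersetCard m U, (1 + (1 - 2 * p) / p) ^ #(S ∩ B) := by
        simp only [pow_mul, hz_sq]
    _ ≤ (#U).choose m * (1 + p * ((1 - 2 * p) / p)) ^ m :=
        sum_one_add_pow_card_inter_le hBU hp₀.le (by linarith) hBp m
          (div_nonneg (by linarith) hp₀.le)
    _ = (#U).choose m * (2 * (1 - p)) ^ m := by
        rw [mul_div_cancel₀ _ hp₀.ne']
        ring
    _ ≤ (#U).choose m * (Real.exp (-((1 - 2 * p) ^ 2 / 2)) * z) ^ m := by
        gcongr ?_ * ?_ ^ m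
        · linarith
        · exact two_mul_one_sub_le_exp_mul_sqrt hp₀ (by linarith)
    _ = Real.exp (-((1 - 2 * p) ^ 2 / 2 * m)) * (#U).choose m * z ^ m := by
        rw [mul_pow, ← Real.exp_nat_mul]
        ring_nf

theorem stmt_2_general (hBU : B ⊆ U) {p : ℝ} (hp₀ : 0 < p) (hp₁ : p ≤ 1 / 2)
    (hBp : (#B : ℝ) ≤ p * #U) {δ : ℝ} (hδ : 0 < δ) {m : ℕ} (hmU : m ≤ #U)
    (hm : 2 * Real.log δ⁻¹ ≤ (1 - 2 * p) ^ 2 * m) :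
    (#{S ∈ powersetCard m U | m ≤ 2 * #(S ∩ B)} : ℝ) / #(powersetCard m U) ≤ δ := by
  have hexp : Real.exp (-((1 - 2 * p) ^ 2 / 2 * m)) ≤ δ := by
    rw [Real.log_inv] at hm
    rw [← Real.le_log_iff_exp_le hδ]
    linarith
  have hchoose : (0 : ℝ) < (#U).choose m := mod_cast Nat.choose_pos hmU
  rw [card_powersetCard, div_le_iff₀ hchoose]
  exact (card_filter_le_two_mul_card_inter_le hBU hp₀ hp₁ hBp m).trans (by gcongr)

end Committee

/-- Lemma 5 (majority-honest-committee): if the committee size `nc` satisfies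
`nc ≥ 18 · log (2φ/ε)`, then a uniformly random `nc`-element subset of the
`n = 3f+1` nodes contains more than `nc/2` Byzantine nodes (members of the
fixed set `B` with `|B| = f`) with probability at most `ε/(2φ)`. -/
theorem stmt_2 (f : ℕ) (hf : 1 ≤ f) (n : ℕ) (hn : n = 3 * f + 1)
    (B : Finset (Fin n)) (hB : B.card = f)
    (ε φ : ℝ) (hε : 0 < ε) (hφ : 1 ≤ φ)
    (nc : ℕ) (hnc1 : 1 ≤ nc) (hnc2 : nc ≤ n)
    (hnc3 : 18 * Real.log (2 * φ / ε) ≤ (nc : ℝ)) :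
    (((Finset.powersetCard nc (Finset.univ : Finset (Fin n))).filter
        (fun S => nc < 2 * (S ∩ B).card)).card : ℝ) /
      ((Finset.powersetCard nc (Finset.univ : Finset (Fin n))).card : ℝ)
      ≤ ε / (2 * φ) := by
  refine le_trans (by gcongr with S; exact le_of_lt) (stmt_2_general (subset_univ B) (p := 1 / 3)
    (by norm_num) (by norm_num) ?_ (by positivity) (by rwa [card_fin]) ?_)
  · rw [card_fin, hB, hn]; push_cast; linarith
  · rw [inv_div]; linarith
end
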